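/- arXiv:2503.11418 — 2 statements merged into one kernel-verified Lean document; each statement's English description precedes it below -/
import Mathlib

section
/- Let X₁, X₂, X₃ be independent uniformly distributed random points on [0,1], and let ρ_T(x,y) = min(|x−y|, 1−|x−y|) be the distance on the one-dimensional unit torus. Fix 1/3 < r₀ < 1/2. Then: (i) the probability that all three pairwise distances ρ_T(Xᵢ,Xⱼ) are less than r₀ equals 12r₀² − 6r₀ + 1; (ii) the probability that ρ_T(X₁,X₂) < r₀ and ρ_T(X₁,X₃) < r₀ but ρ_T(X₂,X₃) > r₀ equals −8r₀² + 6r₀ − 1; (iii) the probability that ρ_T(X₁,X₂) < r₀ but ρ_T(X₁,X₃) > r₀ and ρ_T(X₂,X₃) > r₀ equals (2r₀−1)²; (iv) the probability that all three pairwise distances exceed r₀ equals 0. -/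
open MeasureTheory

/-- The distance on the one-dimensional unit torus. -/
noncomputable def rhoT (x y : ℝ) : ℝ := min |x - y| (1 - |x - y|)

/-- The unit cube `[0,1]³` as a subset of `ℝ × ℝ × ℝ`:
the law of three i.i.d. uniform points on `[0,1]` is Lebesgue measure on this cube. -/
def unitCube3 : Set (ℝ × ℝ × ℝ) :=
  Set.Icc (0:ℝ) 1 ×ˢ Set.Icc (0:ℝ) 1 ×ˢ Set.Icc (0:ℝ) 1

/-! In a metric probability space where all balls of radius `r` have the same mass `p` and all
spheres of radius `r` are null, two edges at a common vertex are independent. Splitting on the third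
pair then expresses the probability of each labelled graph on three random points through `p` and
the probability that the graph is empty. Wrapping `[0, 1]` around the circle `ℝ / ℤ` turns `rhoT`
into the metric, where `p = 2r`; the three distances between points of the circle add up to at most
`1`, so for `r ≥ 1/3` the graph is never empty. -/

open Metric Set

section MetricProbabilitySpace

variable {α : Type*} [PseudoMetricSpace α]

/-- The event that the distances `d(x₁, x₂)`, `d(x₁, x₃)`, `d(x₂, x₃)` of a triple of points lie
in `A`, `B`, `C` respectively. Taking each of these sets to be `Iio r` (edge) or `Ioi r` (no edge)
gives the labelled geometric graphs of radius `r` on three nodes. -/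
def tripleDistEvent (A B C : Set ℝ) : Set (α × α × α) :=
  {p | dist p.1 p.2.1 ∈ A ∧ dist p.1 p.2.2 ∈ B ∧ dist p.2.1 p.2.2 ∈ C}

lemma dist_preimage_Iio (x : α) (r : ℝ) : dist x ⁻¹' Iio r = ball x r := by
  ext y
  exact mem_ball'.symm

lemma dist_preimage_Ioi (x : α) (r : ℝ) : dist x ⁻¹' Ioi r = (ball x r ∪ sphere x r)ᶜ := by
  ext y
  simp [ball_union_sphere, dist_comm y x]

variable [MeasurableSpace α] [OpensMeasurableSpace α] {μ : Measure α} {A B C : Set ℝ}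
  {a b p r : ℝ}

lemma measureReal_dist_preimage_Ioi [IsProbabilityMeasure μ] {x : α}
    (hball : μ.real (ball x r) = p) (hsphere : μ (sphere x r) = 0) :
    μ.real (dist x ⁻¹' Ioi r) = 1 - p := by
  rw [dist_preimage_Ioi,
    probReal_compl_eq_one_sub (measurableSet_ball.union isClosed_sphere.measurableSet),
    measureReal_congr (union_ae_eq_left_of_ae_eq_empty (ae_eq_empty.mpr hsphere)), hball]

variable [SecondCountableTopology α]

lemma measurableSet_tripleDistEvent (hA : MeasurableSet A) (hB : MeasurableSet B)
    (hC : MeasurableSet C) : MeasurableSet (tripleDistEvent A B C : Set (α × α × α)) := by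
  have measurable_dist₁₂ : Measurable fun p : α × α × α ↦ dist p.1 p.2.1 := by fun_prop
  have measurable_dist₁₃ : Measurable fun p : α × α × α ↦ dist p.1 p.2.2 := by fun_prop
  have measurable_dist₂₃ : Measurable fun p : α × α × α ↦ dist p.2.1 p.2.2 := by fun_prop
  exact (measurable_dist₁₂ hA).inter ((measurable_dist₁₃ hB).inter (measurable_dist₂₃ hC))

lemma measureReal_tripleDistEvent_rotate [SFinite μ] (hA : MeasurableSet A)
    (hB : MeasurableSet B) (hC : MeasurableSet C) :
    (μ.prod (μ.prod μ)).real (tripleDistEvent A B C) =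
      (μ.prod (μ.prod μ)).real (tripleDistEvent B C A) := by
  have rotate_preserving :
      MeasurePreserving (fun p : α × α × α ↦ (p.2.1, p.2.2, p.1)) (μ.prod (μ.prod μ))
        (μ.prod (μ.prod μ)) :=
    (measurePreserving_prodAssoc μ μ μ).comp Measure.measurePreserving_swap
  rw [← rotate_preserving.measureReal_preimage
    (measurableSet_tripleDistEvent hA hB hC).nullMeasurableSet]
  congr 1
  ext ⟨x, y, z⟩
  simp only [tripleDistEvent, mem_preimage, mem_ofPred_eq, dist_comm y x, dist_comm z x]
  tauto

lemma measure_tripleDistEvent_univ_right [SFinite μ] (hA : MeasurableSet A)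
    (hB : MeasurableSet B) :
    μ.prod (μ.prod μ) (tripleDistEvent A B univ) =
      ∫⁻ x, μ (dist x ⁻¹' A) * μ (dist x ⁻¹' B) ∂μ := by
  rw [Measure.prod_apply (measurableSet_tripleDistEvent hA hB .univ)]
  refine lintegral_congr fun x ↦ ?_
  have slice_eq_prod :
      Prod.mk x ⁻¹' tripleDistEvent A B univ = (dist x ⁻¹' A) ×ˢ (dist x ⁻¹' B) := by
    ext
    simp [tripleDistEvent]
  rw [slice_eq_prod, Measure.prod_prod]

lemma measureReal_tripleDistEvent_univ_right [IsProbabilityMeasure μ] (hA : MeasurableSet A)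
    (hB : MeasurableSet B) (ha : ∀ x, μ.real (dist x ⁻¹' A) = a)
    (hb : ∀ x, μ.real (dist x ⁻¹' B) = b) :
    (μ.prod (μ.prod μ)).real (tripleDistEvent A B univ) = a * b := by
  obtain ⟨x₀⟩ := μ.nonempty_of_neZero
  have measure_eq (S : Set ℝ) (s : ℝ) (hs : ∀ x, μ.real (dist x ⁻¹' S) = s) (x : α) :
      μ (dist x ⁻¹' S) = ENNReal.ofReal s := by
    rw [← hs x, ofReal_measureReal]
  have ha₀ : 0 ≤ a := ha x₀ ▸ measureReal_nonneg
  have hb₀ : 0 ≤ b := hb x₀ ▸ measureReal_nonneg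
  simp [Measure.real, measure_tripleDistEvent_univ_right hA hB, measure_eq A a ha,
    measure_eq B b hb, ha₀, hb₀]

lemma ae_dist_ne [SFinite μ] (hsphere : ∀ x, μ (sphere x r) = 0) :
    ∀ᵐ q ∂μ.prod μ, dist q.1 q.2 ≠ r := by
  have measurableSet_dist_ne : MeasurableSet {q : α × α | dist q.1 q.2 ≠ r} :=
    measurable_dist (measurableSet_singleton r).compl
  rw [Measure.ae_prod_iff_ae_ae measurableSet_dist_ne]
  refine .of_forall fun x ↦ measure_mono_null (fun y hy ↦ ?_) (hsphere x)
  rw [mem_sphere']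
  exact not_not.mp hy

lemma measureReal_tripleDistEvent_Iio_add_Ioi [IsFiniteMeasure μ]
    (hsphere : ∀ x, μ (sphere x r) = 0) (hA : MeasurableSet A) (hB : MeasurableSet B) :
    (μ.prod (μ.prod μ)).real (tripleDistEvent A B (Iio r)) +
        (μ.prod (μ.prod μ)).real (tripleDistEvent A B (Ioi r)) =
      (μ.prod (μ.prod μ)).real (tripleDistEvent A B univ) := by
  have disjoint_Iio_Ioi :
      Disjoint (tripleDistEvent A B (Iio r) : Set (α × α × α)) (tripleDistEvent A B (Ioi r)) :=
    disjoint_left.mpr fun _ h_lt h_gt ↦ lt_asymm (mem_Iio.mp h_lt.2.2) h_gt.2.2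
  rw [← measureReal_union disjoint_Iio_Ioi
    (measurableSet_tripleDistEvent hA hB measurableSet_Ioi)]
  refine measureReal_congr (Filter.eventuallyEq_set.mpr ?_)
  filter_upwards [Measure.quasiMeasurePreserving_snd.ae (ae_dist_ne hsphere)] with q hq
  simp only [tripleDistEvent, mem_union, mem_ofPred_eq, mem_univ, mem_Iio, mem_Ioi]
  have := hq.lt_or_gt
  tauto

lemma measureReal_tripleDistEvent_Iio_add_Ioi_eq_mul [IsProbabilityMeasure μ]
    (hsphere : ∀ x, μ (sphere x r) = 0) (hA : MeasurableSet A) (hB : MeasurableSet B)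
    (ha : ∀ x, μ.real (dist x ⁻¹' A) = a) (hb : ∀ x, μ.real (dist x ⁻¹' B) = b) :
    (μ.prod (μ.prod μ)).real (tripleDistEvent A B (Iio r)) +
        (μ.prod (μ.prod μ)).real (tripleDistEvent A B (Ioi r)) = a * b :=
  (measureReal_tripleDistEvent_Iio_add_Ioi hsphere hA hB).trans
    (measureReal_tripleDistEvent_univ_right hA hB ha hb)

lemma measureReal_tripleDistEvent_one_edge [IsProbabilityMeasure μ]
    (hball : ∀ x, μ.real (ball x r) = p) (hsphere : ∀ x, μ (sphere x r) = 0) :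
    (μ.prod (μ.prod μ)).real (tripleDistEvent (Iio r) (Ioi r) (Ioi r)) =
      (1 - p) ^ 2 - (μ.prod (μ.prod μ)).real (tripleDistEvent (Ioi r) (Ioi r) (Ioi r)) := by
  have hfar x := measureReal_dist_preimage_Ioi (hball x) (hsphere x)
  have two_nonedges := measureReal_tripleDistEvent_Iio_add_Ioi_eq_mul hsphere
    measurableSet_Ioi measurableSet_Ioi hfar hfar
  rw [measureReal_tripleDistEvent_rotate measurableSet_Iio measurableSet_Ioi measurableSet_Ioi]
  linear_combination two_nonedges

lemma measureReal_tripleDistEvent_two_edges [IsProbabilityMeasure μ]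
    (hball : ∀ x, μ.real (ball x r) = p) (hsphere : ∀ x, μ (sphere x r) = 0) :
    (μ.prod (μ.prod μ)).real (tripleDistEvent (Iio r) (Iio r) (Ioi r)) =
      p * (1 - p) - (1 - p) ^ 2 +
        (μ.prod (μ.prod μ)).real (tripleDistEvent (Ioi r) (Ioi r) (Ioi r)) := by
  have hnear x : μ.real (dist x ⁻¹' Iio r) = p := by rw [dist_preimage_Iio, hball]
  have hfar x := measureReal_dist_preimage_Ioi (hball x) (hsphere x)
  have edge_and_nonedge := measureReal_tripleDistEvent_Iio_add_Ioi_eq_mul hsphere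
    measurableSet_Iio measurableSet_Ioi hnear hfar
  rw [measureReal_tripleDistEvent_rotate measurableSet_Iio measurableSet_Iio measurableSet_Ioi]
  linear_combination edge_and_nonedge - measureReal_tripleDistEvent_one_edge hball hsphere

lemma measureReal_tripleDistEvent_three_edges [IsProbabilityMeasure μ]
    (hball : ∀ x, μ.real (ball x r) = p) (hsphere : ∀ x, μ (sphere x r) = 0) :
    (μ.prod (μ.prod μ)).real (tripleDistEvent (Iio r) (Iio r) (Iio r)) =
      p ^ 2 - p * (1 - p) + (1 - p) ^ 2 -
        (μ.prod (μ.prod μ)).real (tripleDistEvent (Ioi r) (Ioi r) (Ioi r)) := by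
  have hnear x : μ.real (dist x ⁻¹' Iio r) = p := by rw [dist_preimage_Iio, hball]
  have two_edges := measureReal_tripleDistEvent_Iio_add_Ioi_eq_mul hsphere
    measurableSet_Iio measurableSet_Iio hnear hnear
  linear_combination two_edges - measureReal_tripleDistEvent_two_edges hball hsphere

end MetricProbabilitySpace

section Circle

variable {T : ℝ}

lemma addCircle_exists_coe_eq_abs_eq_norm (u : AddCircle T) :
    ∃ x : ℝ, (x : AddCircle T) = u ∧ |x| = ‖u‖ := by
  induction u using QuotientAddGroup.induction_on with
  | H x =>
    refine ⟨x - round (T⁻¹ * x) * T, ?_, (AddCircle.norm_eq T).symm⟩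
    rw [← zsmul_eq_mul, AddCircle.coe_sub, AddCircle.coe_zsmul, AddCircle.coe_period, smul_zero,
      sub_zero]

lemma addCircle_norm_coe_le_abs (x : ℝ) : ‖(x : AddCircle T)‖ ≤ |x| :=
  QuotientAddGroup.norm_mk_le_norm

lemma addCircle_coe_abs_period : ((|T| : ℝ) : AddCircle T) = 0 := by
  rcases abs_choice T with h | h <;> simp [h]

lemma addCircle_norm_add_norm_add_norm_add_le (hT : T ≠ 0) (u v : AddCircle T) :
    ‖u‖ + ‖v‖ + ‖u + v‖ ≤ |T| := by
  have norm_u_le := AddCircle.norm_le_half_period T hT (x := u)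
  have norm_v_le := AddCircle.norm_le_half_period T hT (x := v)
  obtain ⟨x, rfl, hx⟩ := addCircle_exists_coe_eq_abs_eq_norm u
  obtain ⟨y, rfl, hy⟩ := addCircle_exists_coe_eq_abs_eq_norm v
  have norm_le : ‖(x + y : AddCircle T)‖ ≤ |x + y| := addCircle_norm_coe_le_abs (x + y)
  have norm_le_sub : ‖(x + y : AddCircle T)‖ ≤ |x + y - abs T| := by
    simpa [addCircle_coe_abs_period] using addCircle_norm_coe_le_abs (T := T) (x + y - |T|)
  have norm_le_add : ‖(x + y : AddCircle T)‖ ≤ |x + y + abs T| := by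
    simpa [addCircle_coe_abs_period] using addCircle_norm_coe_le_abs (T := T) (x + y + |T|)
  -- If `x` and `y` have opposite signs, use `norm_le` and `|x|, |y| ≤ |T| / 2`; if the signs agree,
  -- use `norm_le_sub` or `norm_le_add`, whose right-hand side is then `|T| - |x| - |y|`.
  grind

lemma addCircle_dist_add_dist_add_dist_le (hT : T ≠ 0) (x y z : AddCircle T) :
    dist x y + dist x z + dist y z ≤ |T| := by
  have h := addCircle_norm_add_norm_add_norm_add_le hT (x - y) (y - z)
  rw [sub_add_sub_cancel] at h
  simp only [dist_eq_norm]
  linarith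

lemma addCircle_tripleDistEvent_Ioi_eq_empty (hT : T ≠ 0) {r : ℝ} (hr : |T| / 3 ≤ r) :
    (tripleDistEvent (Ioi r) (Ioi r) (Ioi r) : Set (AddCircle T × AddCircle T × AddCircle T)) =
      ∅ := by
  refine eq_empty_of_forall_notMem fun ⟨x, y, z⟩ ⟨hxy, hxz, hyz⟩ ↦ ?_
  have := addCircle_dist_add_dist_add_dist_le hT x y z
  simp only [mem_Ioi] at hxy hxz hyz
  linarith

variable [Fact (0 < T)]

lemma addCircle_volume_sphere_eq_zero (x : AddCircle T) (r : ℝ) : volume (sphere x r) = 0 := by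
  rw [← closedBall_sdiff_ball]
  exact ae_le_set.mp AddCircle.closedBall_ae_eq_ball.le

lemma addCircle_volumeReal_ball {r : ℝ} (hr : 0 ≤ r) (hrT : r ≤ T / 2) (x : AddCircle T) :
    volume.real (ball x r) = 2 * r := by
  rw [← measureReal_congr AddCircle.closedBall_ae_eq_ball, Measure.real,
    AddCircle.volume_closedBall, min_eq_right (by linarith), ENNReal.toReal_ofReal (by linarith)]

end Circle

section UnitInterval

instance isProbabilityMeasure_volume_unitAddCircle :
    IsProbabilityMeasure (volume : Measure UnitAddCircle) :=
  ⟨UnitAddCircle.measure_univ⟩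

lemma norm_coe_unitAddCircle_eq_min {x : ℝ} (hx : |x| ≤ 1) :
    ‖(x : UnitAddCircle)‖ = min |x| (1 - |x|) := by
  have norm_eq_abs {y : ℝ} (hy : |y| ≤ 1 / 2) : ‖(y : UnitAddCircle)‖ = |y| :=
    (AddCircle.norm_coe_eq_abs_iff 1 one_ne_zero).mpr (by simpa using hy)
  rcases le_total |x| (1 / 2) with hx_half | hx_half
  · rw [norm_eq_abs hx_half, min_eq_left (by linarith)]
  · have norm_coe_abs : ‖(x : UnitAddCircle)‖ = ‖((|x| : ℝ) : UnitAddCircle)‖ := by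
      rcases abs_choice x with h | h <;> simp [h]
    have coe_eq : ((|x| : ℝ) : UnitAddCircle) = ((|x| - 1 : ℝ) : UnitAddCircle) := by
      rw [AddCircle.coe_sub, AddCircle.coe_period, sub_zero]
    have abs_sub_one : |(|x| - 1)| = 1 - |x| := by
      rw [abs_sub_comm, abs_of_nonneg (by linarith)]
    rw [norm_coe_abs, coe_eq, norm_eq_abs (by linarith), abs_sub_one, min_eq_right (by linarith)]

lemma rhoT_eq_dist {x y : ℝ} (hxy : |x - y| ≤ 1) :
    rhoT x y = dist (x : UnitAddCircle) (y : UnitAddCircle) := by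
  rw [dist_eq_norm, ← AddCircle.coe_sub, norm_coe_unitAddCircle_eq_min hxy, rhoT]

lemma measurePreserving_coe_unitAddCircle_Icc :
    MeasurePreserving ((↑) : ℝ → UnitAddCircle) (volume.restrict (Icc 0 1)) volume := by
  rw [← Measure.restrict_congr_set Ioc_ae_eq_Icc]
  simpa using UnitAddCircle.measurePreserving_mk 0

lemma measurePreserving_coe_unitAddCircle_unitCube3 :
    MeasurePreserving (Prod.map (↑) (Prod.map (↑) (↑)) :
        ℝ × ℝ × ℝ → UnitAddCircle × UnitAddCircle × UnitAddCircle)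
      (volume.restrict unitCube3) volume := by
  have h := measurePreserving_coe_unitAddCircle_Icc
  simpa only [unitCube3, Measure.volume_eq_prod, Measure.prod_restrict] using h.prod (h.prod h)

lemma volume_rhoT_event {A B C : Set ℝ} (hA : MeasurableSet A) (hB : MeasurableSet B)
    (hC : MeasurableSet C) :
    volume {p : ℝ × ℝ × ℝ | p ∈ unitCube3 ∧
        rhoT p.1 p.2.1 ∈ A ∧ rhoT p.1 p.2.2 ∈ B ∧ rhoT p.2.1 p.2.2 ∈ C} =
      ENNReal.ofReal (volume.real
        (tripleDistEvent A B C : Set (UnitAddCircle × UnitAddCircle × UnitAddCircle))) := by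
  have measurableSet_event := measurableSet_tripleDistEvent (α := UnitAddCircle) hA hB hC
  rw [ofReal_measureReal, ← measurePreserving_coe_unitAddCircle_unitCube3.measure_preimage
      measurableSet_event.nullMeasurableSet,
    Measure.restrict_apply
      (measurePreserving_coe_unitAddCircle_unitCube3.measurable measurableSet_event)]
  congr 1
  ext ⟨x, y, z⟩
  rw [inter_comm]
  refine and_congr_right fun ⟨hx, hy, hz⟩ ↦ ?_
  have rhoT_eq {s t : ℝ} (hs : s ∈ Icc 0 1) (ht : t ∈ Icc 0 1) :
      rhoT s t = dist (s : UnitAddCircle) t :=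
    rhoT_eq_dist (Real.dist_le_of_mem_Icc_01 hs ht)
  simp only [rhoT_eq hx hy, rhoT_eq hx hz, rhoT_eq hy hz]
  rfl

end UnitInterval

theorem stmt_1 (r₀ : ℝ) (h13 : 1/3 < r₀) (h12 : r₀ < 1/2) :
    (volume {p : ℝ × ℝ × ℝ | p ∈ unitCube3 ∧
        rhoT p.1 p.2.1 < r₀ ∧ rhoT p.1 p.2.2 < r₀ ∧ rhoT p.2.1 p.2.2 < r₀}
      = ENNReal.ofReal (12 * r₀ ^ 2 - 6 * r₀ + 1)) ∧
    (volume {p : ℝ × ℝ × ℝ | p ∈ unitCube3 ∧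
        rhoT p.1 p.2.1 < r₀ ∧ rhoT p.1 p.2.2 < r₀ ∧ rhoT p.2.1 p.2.2 > r₀}
      = ENNReal.ofReal (-8 * r₀ ^ 2 + 6 * r₀ - 1)) ∧
    (volume {p : ℝ × ℝ × ℝ | p ∈ unitCube3 ∧
        rhoT p.1 p.2.1 < r₀ ∧ rhoT p.1 p.2.2 > r₀ ∧ rhoT p.2.1 p.2.2 > r₀}
      = ENNReal.ofReal ((2 * r₀ - 1) ^ 2)) ∧
    (volume {p : ℝ × ℝ × ℝ | p ∈ unitCube3 ∧
        rhoT p.1 p.2.1 > r₀ ∧ rhoT p.1 p.2.2 > r₀ ∧ rhoT p.2.1 p.2.2 > r₀}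
      = 0) := by
  have hball := addCircle_volumeReal_ball (T := 1) (r := r₀) (by linarith) h12.le
  have hsphere (x : UnitAddCircle) := addCircle_volume_sphere_eq_zero x r₀
  have no_edges : (volume : Measure (UnitAddCircle × UnitAddCircle × UnitAddCircle)).real
      (tripleDistEvent (Ioi r₀) (Ioi r₀) (Ioi r₀)) = 0 := by
    rw [addCircle_tripleDistEvent_Ioi_eq_empty one_ne_zero (by simpa using h13.le),
      measureReal_empty]
  have one_edge := measureReal_tripleDistEvent_one_edge hball hsphere
  have two_edges := measureReal_tripleDistEvent_two_edges hball hsphere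
  have three_edges := measureReal_tripleDistEvent_three_edges hball hsphere
  simp only [← Measure.volume_eq_prod, no_edges] at one_edge two_edges three_edges
  have near := measurableSet_Iio (a := r₀)
  have far := measurableSet_Ioi (a := r₀)
  refine ⟨(volume_rhoT_event near near near).trans ?_, (volume_rhoT_event near near far).trans ?_,
    (volume_rhoT_event near far far).trans ?_, (volume_rhoT_event far far far).trans ?_⟩
  · rw [three_edges]
    ring_nf
  · rw [two_edges]
    ring_nf
  · rw [one_edge]
    ring_nf
  · rw [no_edges, ENNReal.ofReal_zero]
end

section
/- Let X₁, X₂, X₃ be independent uniformly distributed random points on [0,1] with the Euclidean distance |x−y|. Fix 0 < r₀ < 1/2. Then: (i) the probability that all three pairwise distances are less than r₀ equals 3r₀² − 2r₀³; (ii) the probability that |X₁−X₂| < r₀ and |X₁−X₃| < r₀ but |X₂−X₃| > r₀ equals r₀² − (4/3)r₀³; (iii) the probability that |X₁−X₂| < r₀ but |X₁−X₃| > r₀ and |X₂−X₃| > r₀ equals (14/3)r₀³ − 6r₀² + 2r₀; (iv) the probability that all three pairwise distances exceed r₀ equals (1−2r₀)³. -/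
open MeasureTheory

/-!
Up to null sets, distance greater than `r` is the complement of distance less than `r`, so by
exchangeability and inclusion–exclusion everything follows from the probabilities of one edge, of
two edges at a common vertex, and of the triangle. Conditionally on `X₁ = x`, the first two are
`ℓ(x)` and `ℓ(x)²`, where `ℓ(x)` is the length of `(x - r, x + r) ∩ [0,1]`. For the triangle,
condition instead on the smallest point, which is `X₁` with probability `1/3`: if `X₁ = x` is the
smallest, the three points are pairwise `r`-close exactly when the other two lie in `(x, x + r)`,
so the edge between those two imposes no further condition and the conditional probability is
again a square.
-/

open Set

section InclusionExclusion

variable {Ω : Type*} [MeasurableSpace Ω] {μ : Measure Ω} [IsFiniteMeasure μ] {A B C : Set Ω}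

lemma measureReal_sdiff_eq_sub_inter (hB : MeasurableSet B) :
    μ.real (A \ B) = μ.real A - μ.real (A ∩ B) := by
  linarith [measureReal_inter_add_sdiff (μ := μ) (s := A) hB]

lemma measureReal_sdiff_union (hB : MeasurableSet B) (hC : MeasurableSet C) :
    μ.real (A \ (B ∪ C)) = μ.real A - μ.real (A ∩ B) - μ.real (A ∩ C) + μ.real (A ∩ B ∩ C) := by
  rw [← sdiff_sdiff, measureReal_sdiff_eq_sub_inter hC, measureReal_sdiff_eq_sub_inter hB,
    inter_comm (A \ B), ← inter_sdiff_assoc, measureReal_sdiff_eq_sub_inter hB,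
    inter_comm C A, inter_right_comm]
  ring

lemma measureReal_compl_union_union (hA : MeasurableSet A) (hB : MeasurableSet B)
    (hC : MeasurableSet C) :
    μ.real (A ∪ B ∪ C)ᶜ = μ.real univ - μ.real A - μ.real B - μ.real C
      + μ.real (A ∩ B) + μ.real (A ∩ C) + μ.real (B ∩ C) - μ.real (A ∩ B ∩ C) := by
  rw [compl_eq_univ_sdiff, union_assoc, ← sdiff_sdiff, measureReal_sdiff_union hB hC,
    inter_assoc, ← compl_eq_univ_sdiff, measureReal_compl hA]
  simp only [inter_comm Aᶜ, ← sdiff_eq, measureReal_sdiff_eq_sub_inter hA]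
  rw [inter_comm B A, inter_comm C A, inter_comm (B ∩ C) A, ← inter_assoc]
  ring

end InclusionExclusion

section Triples

/-- The cyclic shift `(x, y, z) ↦ (y, z, x)`, used to express exchangeability of i.i.d. triples. -/
def rotateTriple {α : Type*} (p : α × α × α) : α × α × α := (p.2.1, p.2.2, p.1)

lemma measurePreserving_rotateTriple {α : Type*} [MeasurableSpace α] (μ : Measure α) [SFinite μ] :
    MeasurePreserving rotateTriple (μ.prod (μ.prod μ)) (μ.prod (μ.prod μ)) :=
  (measurePreserving_prodAssoc μ μ μ).comp Measure.measurePreserving_swap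

lemma measureReal_rotateTriple_preimage {α : Type*} [MeasurableSpace α] (μ : Measure α) [SFinite μ]
    {S : Set (α × α × α)} (hS : MeasurableSet S) :
    (μ.prod (μ.prod μ)).real (rotateTriple ⁻¹' S) = (μ.prod (μ.prod μ)).real S :=
  (measurePreserving_rotateTriple μ).measureReal_preimage hS.nullMeasurableSet

lemma measureReal_prod_prod_inter {α β γ : Type*} [MeasurableSpace α] [MeasurableSpace β]
    [MeasurableSpace γ] (μ : Measure α) (ν : Measure β) [IsFiniteMeasure ν]
    (ρ : Measure γ) [IsFiniteMeasure ρ] {S : Set (α × β)} {T : Set (α × γ)}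
    (hS : MeasurableSet S) (hT : MeasurableSet T) :
    (μ.prod (ν.prod ρ)).real {p | (p.1, p.2.1) ∈ S ∧ (p.1, p.2.2) ∈ T}
      = ∫ x, ν.real (Prod.mk x ⁻¹' S) * ρ.real (Prod.mk x ⁻¹' T) ∂μ := by
  have hST : MeasurableSet {p : α × β × γ | (p.1, p.2.1) ∈ S ∧ (p.1, p.2.2) ∈ T} :=
    .inter ((by fun_prop : Measurable fun p : α × β × γ => (p.1, p.2.1)) hS)
      ((by fun_prop : Measurable fun p : α × β × γ => (p.1, p.2.2)) hT)
  rw [measureReal_def, Measure.prod_apply hST, ← integral_toReal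
    (measurable_measure_prodMk_left hST).aemeasurable (.of_forall fun _ => measure_lt_top _ _)]
  exact integral_congr_ae (.of_forall fun x =>
    measureReal_prod_prod (Prod.mk x ⁻¹' S) (Prod.mk x ⁻¹' T))

variable (μ : Measure ℝ) [NullSingletonClass μ]

lemma ae_prod_abs_sub_ne [SFinite μ] (c : ℝ) : ∀ᵐ q ∂μ.prod μ, |q.1 - q.2| ≠ c := by
  have hmeas : MeasurableSet {q : ℝ × ℝ | |q.1 - q.2| ≠ c} :=
    (isOpen_ne_fun (by fun_prop) continuous_const).measurableSet
  refine (Measure.ae_prod_iff_ae_ae hmeas).2 (.of_forall fun x => ?_)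
  filter_upwards [(countable_singleton (x + c)).ae_notMem μ,
    (countable_singleton (x - c)).ae_notMem μ] with y hadd hsub
  grind

lemma ae_pairwise_abs_sub_ne [SFinite μ] (c : ℝ) :
    ∀ᵐ p ∂μ.prod (μ.prod μ), |p.1 - p.2.1| ≠ c ∧ |p.1 - p.2.2| ≠ c ∧ |p.2.1 - p.2.2| ≠ c := by
  have rotate := (measurePreserving_rotateTriple μ).quasiMeasurePreserving
  have h₂₃ : ∀ᵐ p ∂μ.prod (μ.prod μ), |p.2.1 - p.2.2| ≠ c :=
    Measure.quasiMeasurePreserving_snd.ae (ae_prod_abs_sub_ne μ c)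
  filter_upwards [h₂₃, rotate.ae h₂₃, rotate.ae (rotate.ae h₂₃)] with p h₂₃ h₃₁ h₁₂
  exact ⟨h₁₂, abs_sub_comm p.2.2 p.1 ▸ h₃₁, h₂₃⟩

/-- The triples whose first entry is strictly smaller than the two others, so that every triple
of distinct points lies in exactly one cyclic shift of this set. -/
def fstIsLeast : Set (ℝ × ℝ × ℝ) := {p | p.1 < p.2.1 ∧ p.1 < p.2.2}

lemma measurableSet_fstIsLeast : MeasurableSet fstIsLeast :=
  .inter (measurableSet_lt measurable_fst measurable_snd.fst)
    (measurableSet_lt measurable_fst measurable_snd.snd)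

lemma disjoint_fstIsLeast_rotateTriple_preimage :
    Disjoint fstIsLeast (rotateTriple ⁻¹' fstIsLeast) :=
  disjoint_left.2 fun _ hfst hsnd => lt_asymm hfst.1 hsnd.2

lemma disjoint_fstIsLeast_rotateTriple_preimage_preimage :
    Disjoint fstIsLeast (rotateTriple ⁻¹' (rotateTriple ⁻¹' fstIsLeast)) :=
  disjoint_left.2 fun _ hfst hthd => lt_asymm hfst.2 hthd.1

lemma ae_mem_fstIsLeast_or_rotateTriple [SFinite μ] :
    ∀ᵐ p ∂μ.prod (μ.prod μ), p ∈ fstIsLeast ∪ rotateTriple ⁻¹' fstIsLeast ∪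
      rotateTriple ⁻¹' (rotateTriple ⁻¹' fstIsLeast) := by
  filter_upwards [ae_pairwise_abs_sub_ne μ 0] with p hne
  simp only [abs_ne_zero, sub_ne_zero] at hne
  simp only [fstIsLeast, rotateTriple, mem_union, mem_preimage, mem_ofPred_eq]
  grind

lemma measureReal_eq_three_mul_inter_fstIsLeast [IsFiniteMeasure μ] {T : Set (ℝ × ℝ × ℝ)}
    (hT : MeasurableSet T) (hrot : rotateTriple ⁻¹' T = T) :
    (μ.prod (μ.prod μ)).real T = 3 * (μ.prod (μ.prod μ)).real (T ∩ fstIsLeast) := by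
  have rotate := (measurePreserving_rotateTriple μ).measurable
  set P := μ.prod (μ.prod μ)
  set M₁ := fstIsLeast
  set M₂ := rotateTriple ⁻¹' M₁
  set M₃ := rotateTriple ⁻¹' M₂
  have hM₁ : MeasurableSet M₁ := measurableSet_fstIsLeast
  have hM₂ : MeasurableSet M₂ := rotate hM₁
  have hM₃ : MeasurableSet M₃ := rotate hM₂
  have shift {M : Set (ℝ × ℝ × ℝ)} (hM : MeasurableSet M) :
      P.real (T ∩ rotateTriple ⁻¹' M) = P.real (T ∩ M) := by
    rw [← measureReal_rotateTriple_preimage μ (hT.inter hM), preimage_inter, hrot]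
  have disj₁₂ : Disjoint M₁ M₂ := disjoint_fstIsLeast_rotateTriple_preimage
  have disj₁₃ : Disjoint M₁ M₃ := disjoint_fstIsLeast_rotateTriple_preimage_preimage
  have disj₂₃ : Disjoint M₂ M₃ := disj₁₂.preimage rotateTriple
  calc P.real T = P.real (T ∩ (M₁ ∪ M₂ ∪ M₃)) := by
        refine measureReal_congr ?_
        filter_upwards [ae_mem_fstIsLeast_or_rotateTriple μ] with p hp
        exact propext (and_iff_left hp).symm
    _ = P.real (T ∩ M₁) + P.real (T ∩ M₂) + P.real (T ∩ M₃) := by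
        rw [inter_union_distrib_left, inter_union_distrib_left,
          measureReal_union _ (hT.inter hM₃), measureReal_union _ (hT.inter hM₂)]
        · exact disj₁₂.mono inter_subset_right inter_subset_right
        · rw [← inter_union_distrib_left]
          exact (disj₁₃.union_left disj₂₃).mono inter_subset_right inter_subset_right
    _ = 3 * P.real (T ∩ M₁) := by
        rw [shift hM₂, shift hM₁]
        ring

end Triples

section UnitInterval

/-- The uniform distribution on `[0,1]`. -/
noncomputable abbrev unitUniform : Measure ℝ := volume.restrict (Icc 0 1)

/-- The law of three independent uniform points on `[0,1]`. -/
noncomputable abbrev uniformTriple : Measure (ℝ × ℝ × ℝ) :=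
  unitUniform.prod (unitUniform.prod unitUniform)

instance : IsProbabilityMeasure unitUniform := ⟨by simp⟩

lemma uniformTriple_eq_restrict_unitCube3 : uniformTriple = volume.restrict unitCube3 := by
  simp only [uniformTriple, unitUniform, Measure.prod_restrict, unitCube3, Measure.volume_eq_prod]

lemma volume_setOf_mem_unitCube3_and {P : ℝ × ℝ × ℝ → Prop} {S : Set (ℝ × ℝ × ℝ)}
    (hPS : ∀ᵐ p ∂uniformTriple, P p ↔ p ∈ S) :
    volume {p | p ∈ unitCube3 ∧ P p} = ENNReal.ofReal (uniformTriple.real S) := by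
  have hcube : MeasurableSet unitCube3 :=
    measurableSet_Icc.prod (measurableSet_Icc.prod measurableSet_Icc)
  calc volume {p | p ∈ unitCube3 ∧ P p} = volume ({p | P p} ∩ unitCube3) := by
        rw [inter_comm]
        rfl
    _ = uniformTriple {p | P p} := by
        rw [uniformTriple_eq_restrict_unitCube3, Measure.restrict_apply' hcube]
    _ = uniformTriple S := measure_congr (Filter.eventuallyEq_set.2 hPS)
    _ = ENNReal.ofReal (uniformTriple.real S) := by rw [ofReal_measureReal]

lemma integral_unitUniform {E : Type*} [NormedAddCommGroup E] [NormedSpace ℝ E] (f : ℝ → E) :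
    ∫ x, f x ∂unitUniform = ∫ x in (0 : ℝ)..1, f x := by
  rw [intervalIntegral.integral_of_le zero_le_one, integral_Icc_eq_integral_Ioc]

lemma unitUniform_real_Ioo (a b : ℝ) :
    unitUniform.real (Ioo a b) = max (min b 1 - max a 0) 0 := by
  rw [unitUniform, ← restrict_Ioo_eq_restrict_Icc, measureReal_restrict_apply measurableSet_Ioo,
    Ioo_inter_Ioo, Real.volume_real_Ioo]

/-- The length of `(x - r, x + r) ∩ [0,1]` for `x ∈ [0,1]`: the conditional probability that a
uniform point is `r`-close to `x`. -/
noncomputable def nbhdLength (r x : ℝ) : ℝ := min (x + r) 1 - max (x - r) 0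

variable {r x : ℝ}

lemma unitUniform_real_abs_sub_lt (hr : 0 ≤ r) (hx : x ∈ Icc (0 : ℝ) 1) :
    unitUniform.real {y | |x - y| < r} = nbhdLength r x := by
  have hball : {y | |x - y| < r} = Ioo (x - r) (x + r) := by
    ext y
    simp only [mem_ofPred_eq, mem_Ioo, abs_lt]
    constructor <;> rintro ⟨_, _⟩ <;> constructor <;> linarith
  rw [hball, unitUniform_real_Ioo]
  refine max_eq_left (sub_nonneg.2 (max_le (le_min ?_ ?_) (le_min ?_ ?_))) <;>
    linarith [hx.1, hx.2]

lemma unitUniform_real_Ioo_add (hr : 0 ≤ r) (hx : x ∈ Icc (0 : ℝ) 1) :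
    unitUniform.real (Ioo x (x + r)) = min r (1 - x) := by
  have hmin : min (x + r) 1 - x = min r (1 - x) := by rw [← min_sub_sub_right, add_sub_cancel_left]
  rw [unitUniform_real_Ioo, max_eq_left hx.1, hmin]
  exact max_eq_left (le_min hr (sub_nonneg.2 hx.2))

lemma nbhdLength_of_le_left (hxr : x ≤ r) (hxr' : x ≤ 1 - r) : nbhdLength r x = x + r := by
  rw [nbhdLength, min_eq_left (by linarith), max_eq_right (by linarith), sub_zero]

lemma nbhdLength_of_mem_Icc (hx : x ∈ Icc r (1 - r)) : nbhdLength r x = 2 * r := by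
  rw [nbhdLength, min_eq_left (by linarith [hx.2]), max_eq_left (by linarith [hx.1])]
  ring

lemma nbhdLength_of_ge_right (hxr : r ≤ x) (hxr' : 1 - r ≤ x) : nbhdLength r x = 1 + r - x := by
  rw [nbhdLength, min_eq_right (by linarith), max_eq_left (by linarith)]
  ring

lemma integral_comp_nbhdLength (hr : 0 ≤ r) (hr' : r ≤ 1 / 2) {g : ℝ → ℝ} (hg : Continuous g) :
    ∫ x in (0 : ℝ)..1, g (nbhdLength r x) =
      2 * (∫ u in r..2 * r, g u) + (1 - 2 * r) * g (2 * r) := by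
  have hcont : Continuous fun x => g (nbhdLength r x) := by unfold nbhdLength; fun_prop
  have hint (a b : ℝ) := hcont.intervalIntegrable (μ := volume) a b
  have left : ∫ x in (0 : ℝ)..r, g (nbhdLength r x) = ∫ u in r..2 * r, g u := by
    calc ∫ x in (0 : ℝ)..r, g (nbhdLength r x) = ∫ x in (0 : ℝ)..r, g (x + r) :=
          intervalIntegral.integral_congr fun x hx => by
            rw [uIcc_of_le hr] at hx
            simp only [nbhdLength_of_le_left hx.2 (by linarith [hx.2])]
      _ = ∫ u in r..2 * r, g u := by
          rw [intervalIntegral.integral_comp_add_right, zero_add, ← two_mul]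
  have middle : ∫ x in r..(1 - r), g (nbhdLength r x) = (1 - 2 * r) * g (2 * r) := by
    calc ∫ x in r..(1 - r), g (nbhdLength r x) = ∫ _ in r..(1 - r), g (2 * r) :=
          intervalIntegral.integral_congr fun x hx => by
            rw [uIcc_of_le (by linarith)] at hx
            simp only [nbhdLength_of_mem_Icc hx]
      _ = (1 - 2 * r) * g (2 * r) := by
          rw [intervalIntegral.integral_const, smul_eq_mul]
          ring
  have right : ∫ x in (1 - r)..1, g (nbhdLength r x) = ∫ u in r..2 * r, g u := by
    calc ∫ x in (1 - r)..1, g (nbhdLength r x) = ∫ x in (1 - r)..1, g (1 + r - x) :=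
          intervalIntegral.integral_congr fun x hx => by
            rw [uIcc_of_le (by linarith)] at hx
            simp only [nbhdLength_of_ge_right (by linarith [hx.1]) hx.1]
      _ = ∫ u in r..2 * r, g u := by
          rw [intervalIntegral.integral_comp_sub_left]
          ring_nf
  rw [← intervalIntegral.integral_add_adjacent_intervals (hint 0 r) (hint r 1),
    ← intervalIntegral.integral_add_adjacent_intervals (hint r (1 - r)) (hint (1 - r) 1),
    left, middle, right]
  ring

lemma integral_min_one_sub_sq (hr : 0 ≤ r) (hr' : r ≤ 1) :
    ∫ x in (0 : ℝ)..1, min r (1 - x) ^ 2 = r ^ 2 - 2 / 3 * r ^ 3 := by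
  have hint (a b : ℝ) : IntervalIntegrable (fun u => min r u ^ 2) volume a b :=
    (by fun_prop : Continuous fun u => min r u ^ 2).intervalIntegrable a b
  have below : ∫ u in (0 : ℝ)..r, min r u ^ 2 = ∫ u in (0 : ℝ)..r, u ^ 2 :=
    intervalIntegral.integral_congr fun u hu => by
      rw [uIcc_of_le hr] at hu
      simp only [min_eq_right hu.2]
  have above : ∫ u in r..1, min r u ^ 2 = ∫ _ in r..1, r ^ 2 :=
    intervalIntegral.integral_congr fun u hu => by
      rw [uIcc_of_le hr'] at hu
      simp only [min_eq_left hu.1]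
  rw [intervalIntegral.integral_comp_sub_left (fun u => min r u ^ 2), sub_self, sub_zero,
    ← intervalIntegral.integral_add_adjacent_intervals (hint 0 r) (hint r 1), below, above,
    integral_pow, intervalIntegral.integral_const, smul_eq_mul]
  norm_num
  ring

end UnitInterval

section Edges

/-- The event that vertices `1` and `2` are joined in the graph of radius `r`. The inequality is
strict here and in the other edge events; equality has probability zero. -/
def edge₁₂ (r : ℝ) : Set (ℝ × ℝ × ℝ) := {p | |p.1 - p.2.1| < r}

/-- The event that vertices `1` and `3` are joined in the graph of radius `r`. -/
def edge₁₃ (r : ℝ) : Set (ℝ × ℝ × ℝ) := {p | |p.1 - p.2.2| < r}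

/-- The event that vertices `2` and `3` are joined in the graph of radius `r`. -/
def edge₂₃ (r : ℝ) : Set (ℝ × ℝ × ℝ) := {p | |p.2.1 - p.2.2| < r}

lemma measurableSet_abs_sub_lt (r : ℝ) : MeasurableSet {q : ℝ × ℝ | |q.1 - q.2| < r} :=
  measurableSet_lt (by fun_prop) measurable_const

lemma measurableSet_edge₁₂ (r : ℝ) : MeasurableSet (edge₁₂ r) :=
  measurableSet_lt (by fun_prop) measurable_const

lemma measurableSet_edge₁₃ (r : ℝ) : MeasurableSet (edge₁₃ r) :=
  measurableSet_lt (by fun_prop) measurable_const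

lemma measurableSet_edge₂₃ (r : ℝ) : MeasurableSet (edge₂₃ r) :=
  measurableSet_lt (by fun_prop) measurable_const

lemma rotateTriple_preimage_edge₁₂ (r : ℝ) : rotateTriple ⁻¹' edge₁₂ r = edge₂₃ r := rfl

lemma rotateTriple_preimage_edge₁₃ (r : ℝ) : rotateTriple ⁻¹' edge₁₃ r = edge₁₂ r := by
  ext p
  simp only [rotateTriple, edge₁₃, edge₁₂, mem_preimage, mem_ofPred_eq, abs_sub_comm]

lemma rotateTriple_preimage_edge₂₃ (r : ℝ) : rotateTriple ⁻¹' edge₂₃ r = edge₁₃ r := by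
  ext p
  simp only [rotateTriple, edge₂₃, edge₁₃, mem_preimage, mem_ofPred_eq, abs_sub_comm]

variable {r : ℝ}

lemma uniformTriple_real_edge₁₂ (hr : 0 ≤ r) (hr' : r ≤ 1 / 2) :
    uniformTriple.real (edge₁₂ r) = 2 * r - r ^ 2 := by
  calc uniformTriple.real (edge₁₂ r)
      = uniformTriple.real {p | (p.1, p.2.1) ∈ {q : ℝ × ℝ | |q.1 - q.2| < r} ∧
          (p.1, p.2.2) ∈ (univ : Set (ℝ × ℝ))} := by
        simp only [edge₁₂, mem_ofPred_eq, mem_univ, and_true]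
    _ = ∫ x, unitUniform.real {y | |x - y| < r} ∂unitUniform := by
        rw [measureReal_prod_prod_inter _ _ _ (measurableSet_abs_sub_lt r) .univ]
        simp only [preimage_univ, probReal_univ, mul_one, preimage_ofPred_eq]
    _ = ∫ x in (0 : ℝ)..1, nbhdLength r x := by
        rw [← integral_unitUniform]
        exact setIntegral_congr_fun measurableSet_Icc fun x hx => unitUniform_real_abs_sub_lt hr hx
    _ = 2 * r - r ^ 2 := by
        rw [integral_comp_nbhdLength hr hr' continuous_id', integral_id]
        ring

lemma uniformTriple_real_edge₁₂_inter_edge₁₃ (hr : 0 ≤ r) (hr' : r ≤ 1 / 2) :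
    uniformTriple.real (edge₁₂ r ∩ edge₁₃ r) = 4 * r ^ 2 - 10 / 3 * r ^ 3 := by
  have hmeas := measurableSet_abs_sub_lt r
  calc uniformTriple.real (edge₁₂ r ∩ edge₁₃ r)
      = ∫ x, unitUniform.real {y | |x - y| < r} * unitUniform.real {z | |x - z| < r}
          ∂unitUniform := measureReal_prod_prod_inter _ _ _ hmeas hmeas
    _ = ∫ x in (0 : ℝ)..1, nbhdLength r x ^ 2 := by
        rw [← integral_unitUniform]
        refine setIntegral_congr_fun measurableSet_Icc fun x hx => ?_
        simp only [unitUniform_real_abs_sub_lt hr hx, sq]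
    _ = 4 * r ^ 2 - 10 / 3 * r ^ 3 := by
        rw [integral_comp_nbhdLength hr hr' (continuous_pow 2), integral_pow]
        norm_num
        ring

lemma edge_inter_inter_fstIsLeast (r : ℝ) :
    edge₁₂ r ∩ edge₁₃ r ∩ edge₂₃ r ∩ fstIsLeast =
      {p | p.2.1 ∈ Ioo p.1 (p.1 + r) ∧ p.2.2 ∈ Ioo p.1 (p.1 + r)} := by
  ext p
  simp only [edge₁₂, edge₁₃, edge₂₃, fstIsLeast, mem_inter_iff, mem_ofPred_eq, mem_Ioo, abs_lt]
  constructor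
  · rintro ⟨⟨⟨_, _⟩, _⟩, _⟩
    refine ⟨⟨?_, ?_⟩, ?_, ?_⟩ <;> linarith
  · rintro ⟨⟨_, _⟩, _, _⟩
    refine ⟨⟨⟨⟨?_, ?_⟩, ?_, ?_⟩, ?_, ?_⟩, ?_, ?_⟩ <;> linarith

lemma uniformTriple_real_triangle (hr : 0 ≤ r) (hr' : r ≤ 1) :
    uniformTriple.real (edge₁₂ r ∩ edge₁₃ r ∩ edge₂₃ r) = 3 * r ^ 2 - 2 * r ^ 3 := by
  have hmeas : MeasurableSet (edge₁₂ r ∩ edge₁₃ r ∩ edge₂₃ r) :=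
    ((measurableSet_edge₁₂ r).inter (measurableSet_edge₁₃ r)).inter (measurableSet_edge₂₃ r)
  have hrot : rotateTriple ⁻¹' (edge₁₂ r ∩ edge₁₃ r ∩ edge₂₃ r) =
      edge₁₂ r ∩ edge₁₃ r ∩ edge₂₃ r := by
    simp only [preimage_inter, rotateTriple_preimage_edge₁₂, rotateTriple_preimage_edge₁₃,
      rotateTriple_preimage_edge₂₃]
    rw [inter_comm (edge₂₃ r), inter_right_comm]
  have hIoo : MeasurableSet {q : ℝ × ℝ | q.2 ∈ Ioo q.1 (q.1 + r)} :=
    .inter (measurableSet_lt measurable_fst measurable_snd)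
      (measurableSet_lt measurable_snd (measurable_fst.add_const r))
  calc uniformTriple.real (edge₁₂ r ∩ edge₁₃ r ∩ edge₂₃ r)
      = 3 * uniformTriple.real {p | p.2.1 ∈ Ioo p.1 (p.1 + r) ∧ p.2.2 ∈ Ioo p.1 (p.1 + r)} := by
        rw [measureReal_eq_three_mul_inter_fstIsLeast _ hmeas hrot, edge_inter_inter_fstIsLeast]
    _ = 3 * ∫ x, unitUniform.real (Ioo x (x + r)) * unitUniform.real (Ioo x (x + r))
          ∂unitUniform := congrArg (3 * ·) (measureReal_prod_prod_inter _ _ _ hIoo hIoo)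
    _ = 3 * ∫ x in (0 : ℝ)..1, min r (1 - x) ^ 2 := by
        rw [← integral_unitUniform]
        refine congrArg (3 * ·) (setIntegral_congr_fun measurableSet_Icc fun x hx => ?_)
        simp only [unitUniform_real_Ioo_add hr hx, sq]
    _ = 3 * r ^ 2 - 2 * r ^ 3 := by
        rw [integral_min_one_sub_sq hr hr']
        ring

lemma uniformTriple_real_edge₂₃ (r : ℝ) :
    uniformTriple.real (edge₂₃ r) = uniformTriple.real (edge₁₂ r) := by
  rw [← measureReal_rotateTriple_preimage unitUniform (measurableSet_edge₁₂ r),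
    rotateTriple_preimage_edge₁₂]

lemma uniformTriple_real_edge₁₃ (r : ℝ) :
    uniformTriple.real (edge₁₃ r) = uniformTriple.real (edge₁₂ r) := by
  rw [← measureReal_rotateTriple_preimage unitUniform (measurableSet_edge₁₃ r),
    rotateTriple_preimage_edge₁₃]

lemma uniformTriple_real_edge₁₂_inter_edge₂₃ (r : ℝ) :
    uniformTriple.real (edge₁₂ r ∩ edge₂₃ r) = uniformTriple.real (edge₁₂ r ∩ edge₁₃ r) := by
  rw [← measureReal_rotateTriple_preimage unitUniform
      ((measurableSet_edge₁₂ r).inter (measurableSet_edge₁₃ r)),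
    preimage_inter, rotateTriple_preimage_edge₁₂, rotateTriple_preimage_edge₁₃, inter_comm]

lemma uniformTriple_real_edge₁₃_inter_edge₂₃ (r : ℝ) :
    uniformTriple.real (edge₁₃ r ∩ edge₂₃ r) = uniformTriple.real (edge₁₂ r ∩ edge₁₃ r) := by
  rw [← measureReal_rotateTriple_preimage unitUniform
      ((measurableSet_edge₁₃ r).inter (measurableSet_edge₂₃ r)),
    preimage_inter, rotateTriple_preimage_edge₁₃, rotateTriple_preimage_edge₂₃]

lemma ae_abs_sub_gt_iff_notMem_edge (r : ℝ) :
    ∀ᵐ p ∂uniformTriple, (|p.1 - p.2.1| > r ↔ p ∉ edge₁₂ r) ∧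
      (|p.1 - p.2.2| > r ↔ p ∉ edge₁₃ r) ∧ (|p.2.1 - p.2.2| > r ↔ p ∉ edge₂₃ r) := by
  filter_upwards [ae_pairwise_abs_sub_ne unitUniform r] with p ⟨h₁₂, h₁₃, h₂₃⟩
  have gt_iff_not_lt {a : ℝ} (ha : a ≠ r) : a > r ↔ ¬ a < r := by
    rw [not_lt, gt_iff_lt, ha.symm.le_iff_lt]
  exact ⟨gt_iff_not_lt h₁₂, gt_iff_not_lt h₁₃, gt_iff_not_lt h₂₃⟩

lemma uniformTriple_real_path (hr : 0 ≤ r) (hr' : r ≤ 1 / 2) :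
    uniformTriple.real ((edge₁₂ r ∩ edge₁₃ r) \ edge₂₃ r) = r ^ 2 - 4 / 3 * r ^ 3 := by
  rw [measureReal_sdiff_eq_sub_inter (measurableSet_edge₂₃ r),
    uniformTriple_real_edge₁₂_inter_edge₁₃ hr hr',
    uniformTriple_real_triangle hr (by linarith)]
  ring

lemma uniformTriple_real_single_edge (hr : 0 ≤ r) (hr' : r ≤ 1 / 2) :
    uniformTriple.real (edge₁₂ r \ (edge₁₃ r ∪ edge₂₃ r)) =
      14 / 3 * r ^ 3 - 6 * r ^ 2 + 2 * r := by
  rw [measureReal_sdiff_union (measurableSet_edge₁₃ r) (measurableSet_edge₂₃ r),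
    uniformTriple_real_edge₁₂_inter_edge₂₃, uniformTriple_real_edge₁₂ hr hr',
    uniformTriple_real_edge₁₂_inter_edge₁₃ hr hr',
    uniformTriple_real_triangle hr (by linarith)]
  ring

lemma uniformTriple_real_no_edge (hr : 0 ≤ r) (hr' : r ≤ 1 / 2) :
    uniformTriple.real (edge₁₂ r ∪ edge₁₃ r ∪ edge₂₃ r)ᶜ = (1 - 2 * r) ^ 3 := by
  rw [measureReal_compl_union_union (measurableSet_edge₁₂ r) (measurableSet_edge₁₃ r)
      (measurableSet_edge₂₃ r), probReal_univ, uniformTriple_real_edge₁₃,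
    uniformTriple_real_edge₂₃, uniformTriple_real_edge₁₂_inter_edge₂₃,
    uniformTriple_real_edge₁₃_inter_edge₂₃, uniformTriple_real_edge₁₂ hr hr',
    uniformTriple_real_edge₁₂_inter_edge₁₃ hr hr',
    uniformTriple_real_triangle hr (by linarith)]
  ring

end Edges

theorem stmt_2 (r₀ : ℝ) (h0 : 0 < r₀) (h12 : r₀ < 1/2) :
    (volume {p : ℝ × ℝ × ℝ | p ∈ unitCube3 ∧
        |p.1 - p.2.1| < r₀ ∧ |p.1 - p.2.2| < r₀ ∧ |p.2.1 - p.2.2| < r₀}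
      = ENNReal.ofReal (3 * r₀ ^ 2 - 2 * r₀ ^ 3)) ∧
    (volume {p : ℝ × ℝ × ℝ | p ∈ unitCube3 ∧
        |p.1 - p.2.1| < r₀ ∧ |p.1 - p.2.2| < r₀ ∧ |p.2.1 - p.2.2| > r₀}
      = ENNReal.ofReal (r₀ ^ 2 - (4/3) * r₀ ^ 3)) ∧
    (volume {p : ℝ × ℝ × ℝ | p ∈ unitCube3 ∧
        |p.1 - p.2.1| < r₀ ∧ |p.1 - p.2.2| > r₀ ∧ |p.2.1 - p.2.2| > r₀}
      = ENNReal.ofReal ((14/3) * r₀ ^ 3 - 6 * r₀ ^ 2 + 2 * r₀)) ∧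
    (volume {p : ℝ × ℝ × ℝ | p ∈ unitCube3 ∧
        |p.1 - p.2.1| > r₀ ∧ |p.1 - p.2.2| > r₀ ∧ |p.2.1 - p.2.2| > r₀}
      = ENNReal.ofReal ((1 - 2 * r₀) ^ 3)) := by
  have hgt := ae_abs_sub_gt_iff_notMem_edge r₀
  rw [← uniformTriple_real_triangle h0.le (by linarith), ← uniformTriple_real_path h0.le h12.le,
    ← uniformTriple_real_single_edge h0.le h12.le, ← uniformTriple_real_no_edge h0.le h12.le]
  refine ⟨volume_setOf_mem_unitCube3_and (.of_forall fun p => and_assoc.symm),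
    volume_setOf_mem_unitCube3_and ?_, volume_setOf_mem_unitCube3_and ?_,
    volume_setOf_mem_unitCube3_and ?_⟩
  · filter_upwards [hgt] with p ⟨_, _, h₂₃⟩
    rw [h₂₃, ← and_assoc]
    rfl
  · filter_upwards [hgt] with p ⟨_, h₁₃, h₂₃⟩
    rw [h₁₃, h₂₃, ← not_or]
    rfl
  · filter_upwards [hgt] with p ⟨h₁₂, h₁₃, h₂₃⟩
    rw [h₁₂, h₁₃, h₂₃, ← and_assoc, ← not_or, ← not_or]
    rfl
end
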